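/- For any μ ≥ 1 and σ > 0, the quadratic polynomial q_{σ,μ}(t) = t² - γ^mod((2μ+1)/(2(2μ-1)), 1/(2σ^{4μ-2})) / γ^mod(1/2, 1/(2σ^{4μ-2})) is orthogonal to all polynomials of degree at most 1 on [-1,1] with respect to the weight g̃_{σ,μ}; that is, ∫_{-1}^{1} q_{σ,μ}(t)(α + βt) g̃_{σ,μ}(t) dt = 0 for all real α, β. -/

import Mathlib

open MeasureTheory

/-- Lower incomplete gamma function `γ(s,z) = ∫₀^z u^(s-1) e^(-u) du`. -/
noncomputable def lowGamma (s z : ℝ) : ℝ := ∫ u in (0:ℝ)..z, u ^ (s - 1) * Real.exp (-u)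

/-- Modified lower incomplete gamma function `γ^mod(s,z) = γ(s,z)/z^s`. -/
noncomputable def gammaMod (s z : ℝ) : ℝ := lowGamma s z / z ^ s

/-- Second family of densities `g̃_{σ,μ}` on `[-1,1]`. -/
noncomputable def gTilde (σ μ t : ℝ) : ℝ :=
  ((2 * μ - 1) / gammaMod (1 / 2) (1 / (2 * σ ^ (4 * μ - 2)))) *
    (t ^ 2) ^ (μ - 1) * Real.exp (-(1 / 2) * (t ^ 2 / σ ^ 2) ^ (2 * μ - 1))

/-- The quadratic polynomial `q_{σ,μ}`. -/
noncomputable def qPoly (σ μ t : ℝ) : ℝ :=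
  t ^ 2 - gammaMod ((2 * μ + 1) / (2 * (2 * μ - 1))) (1 / (2 * σ ^ (4 * μ - 2)))
            / gammaMod (1 / 2) (1 / (2 * σ ^ (4 * μ - 2)))

/-!
Substituting `u = z * t ^ p` turns the moments of `|t| ^ a * exp (-(z * |t| ^ p))` over `[-1, 1]`
into values of `gammaMod`. Hence `gTilde σ μ` is a probability density whose second moment is the
constant subtracted in `qPoly σ μ`, which gives orthogonality to constants. Orthogonality to `t`
is parity.
-/

section SymmetricInterval

variable {a : ℝ}

lemma integral_eq_zero_of_odd {f : ℝ → ℝ} (hf : f.Odd) : ∫ t in -a..a, f t = 0 := by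
  have h := intervalIntegral.integral_comp_neg (a := -a) (b := a) f
  simp only [hf _, intervalIntegral.integral_neg, neg_neg] at h
  linarith

lemma integral_even_mul_affine {f : ℝ → ℝ} (hf : IntervalIntegrable f volume (-a) a)
    (hf_even : f.Even) (α β : ℝ) :
    ∫ t in -a..a, f t * (α + β * t) = α * ∫ t in -a..a, f t := by
  have h_odd : ∫ t in -a..a, f t * (β * t) = 0 :=
    integral_eq_zero_of_odd fun t => by rw [hf_even t]; ring
  simp only [mul_add]
  rw [intervalIntegral.integral_add (hf.mul_const α) (hf.mul_continuousOn (by fun_prop)), h_odd,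
    intervalIntegral.integral_mul_const, add_zero, mul_comm]

lemma integral_sq_sub_mul_affine_mul_eq_zero {w : ℝ → ℝ} {c : ℝ}
    (hw : IntervalIntegrable w volume (-a) a) (hw_even : w.Even)
    (hc : ∫ t in -a..a, t ^ 2 * w t = c * ∫ t in -a..a, w t) (α β : ℝ) :
    ∫ t in -a..a, (t ^ 2 - c) * (α + β * t) * w t = 0 := by
  have hw_sq : IntervalIntegrable (fun t => t ^ 2 * w t) volume (-a) a :=
    hw.continuousOn_mul (by fun_prop)
  calc
    ∫ t in -a..a, (t ^ 2 - c) * (α + β * t) * w t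
      = ∫ t in -a..a, (t ^ 2 * w t - c * w t) * (α + β * t) := by
        congr 1 with t
        ring
    _ = α * ∫ t in -a..a, (t ^ 2 * w t - c * w t) :=
        integral_even_mul_affine (hw_sq.sub (hw.const_mul c))
          (fun t => by simp only [hw_even t, neg_sq]) α β
    _ = 0 := by
        rw [intervalIntegral.integral_sub hw_sq (hw.const_mul c),
          intervalIntegral.integral_const_mul, hc, sub_self, mul_zero]

lemma intervalIntegral_comp_abs (f : ℝ → ℝ) (ha : 0 ≤ a) :
    ∫ t in -a..a, f |t| = 2 * ∫ t in 0..a, f t := by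
  have h_indicator (t : ℝ) :
      (Set.Iic a).indicator f |t| = (Set.Icc (-a) a).indicator (fun t => f |t|) t := by
    simp only [Set.indicator_apply, Set.mem_Iic, Set.mem_Icc, abs_le]
  have h := integral_comp_abs (f := (Set.Iic a).indicator f)
  simp only [h_indicator] at h
  rwa [integral_indicator measurableSet_Icc, setIntegral_indicator measurableSet_Iic,
    Set.Ioi_inter_Iic, integral_Icc_eq_integral_Ioc,
    ← intervalIntegral.integral_of_le (neg_le_self ha), ← intervalIntegral.integral_of_le ha] at h

end SymmetricInterval

lemma intervalIntegral_comp_rpow {E : Type*} [NormedAddCommGroup E] [NormedSpace ℝ E]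
    (g : ℝ → E) {a p : ℝ} (ha : 0 ≤ a) (hp : 0 < p) :
    ∫ t in 0..a, (p * t ^ (p - 1)) • g (t ^ p) = ∫ u in 0..a ^ p, g u := by
  have h_indicator : ∀ t ∈ Set.Ioi (0 : ℝ),
      (p * t ^ (p - 1)) • (Set.Iic (a ^ p)).indicator g (t ^ p) =
        (Set.Iic a).indicator (fun t => (p * t ^ (p - 1)) • g (t ^ p)) t := fun t ht => by
    simp only [Set.indicator_apply, Set.mem_Iic, Real.rpow_le_rpow_iff (le_of_lt ht) ha hp,
      smul_ite, smul_zero]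
  have h := integral_comp_rpow_Ioi_of_pos (g := (Set.Iic (a ^ p)).indicator g) hp
  rwa [setIntegral_congr_fun measurableSet_Ioi h_indicator,
    setIntegral_indicator measurableSet_Iic, setIntegral_indicator measurableSet_Iic,
    Set.Ioi_inter_Iic, Set.Ioi_inter_Iic, ← intervalIntegral.integral_of_le ha,
    ← intervalIntegral.integral_of_le (Real.rpow_nonneg ha p)] at h

section IncompleteGamma

variable {z : ℝ}

lemma gammaMod_pos {s : ℝ} (hs : 0 < s) (hz : 0 < z) : 0 < gammaMod s z := by
  have h_integrable :
      IntervalIntegrable (fun u : ℝ => u ^ (s - 1) * Real.exp (-u)) volume 0 z :=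
    (intervalIntegral.intervalIntegrable_rpow' (by linarith)).mul_continuousOn (by fun_prop)
  have h_pos : ∀ u ∈ Set.Ioo 0 z, 0 < u ^ (s - 1) * Real.exp (-u) := fun u hu =>
    mul_pos (Real.rpow_pos_of_pos hu.1 _) (Real.exp_pos _)
  exact div_pos (intervalIntegral.intervalIntegral_pos_of_pos_on h_integrable h_pos hz)
    (Real.rpow_pos_of_pos hz s)

lemma gammaMod_eq_integral_zero_one (s : ℝ) (hz : 0 < z) :
    gammaMod s z = ∫ v in (0 : ℝ)..1, v ^ (s - 1) * Real.exp (-(z * v)) := by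
  have h_scale : ∀ v ∈ Set.uIcc (0 : ℝ) 1, z * ((z * v) ^ (s - 1) * Real.exp (-(z * v))) =
      z ^ s * (v ^ (s - 1) * Real.exp (-(z * v))) := fun v hv => by
    rw [Set.uIcc_of_le zero_le_one] at hv
    rw [Real.mul_rpow hz.le hv.1, Real.rpow_sub_one hz.ne']
    field_simp
  have h_low : lowGamma s z =
      z ^ s * ∫ v in (0 : ℝ)..1, v ^ (s - 1) * Real.exp (-(z * v)) := by
    rw [← intervalIntegral.integral_const_mul, ← intervalIntegral.integral_congr h_scale,
      intervalIntegral.integral_const_mul, intervalIntegral.mul_integral_comp_mul_left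
        (f := fun u => u ^ (s - 1) * Real.exp (-u)), mul_zero, mul_one, lowGamma]
  rw [gammaMod, h_low, mul_div_cancel_left₀ _ (Real.rpow_pos_of_pos hz s).ne']

lemma integral_rpow_mul_exp_neg_mul_rpow_zero_one (a : ℝ) {p : ℝ} (hp : 0 < p) (hz : 0 < z) :
    ∫ t in (0 : ℝ)..1, t ^ a * Real.exp (-(z * t ^ p)) = gammaMod ((a + 1) / p) z / p := by
  have h_subst : ∀ t ∈ Set.Ioc (0 : ℝ) 1,
      p * t ^ (p - 1) * ((t ^ p) ^ ((a + 1) / p - 1) * Real.exp (-(z * t ^ p))) =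
        p * (t ^ a * Real.exp (-(z * t ^ p))) := fun t ht => by
    have h_exponent : p - 1 + p * ((a + 1) / p - 1) = a := by field_simp; ring
    rw [← Real.rpow_mul ht.1.le, mul_assoc, ← mul_assoc (t ^ (p - 1)), ← Real.rpow_add ht.1,
      h_exponent]
  have h_comp := intervalIntegral_comp_rpow
    (fun v => v ^ ((a + 1) / p - 1) * Real.exp (-(z * v))) zero_le_one hp
  rw [Real.one_rpow, ← gammaMod_eq_integral_zero_one _ hz] at h_comp
  rw [eq_div_iff hp.ne', mul_comm, ← h_comp, ← intervalIntegral.integral_const_mul]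
  simp only [intervalIntegral.integral_of_le zero_le_one, smul_eq_mul]
  exact (setIntegral_congr_fun measurableSet_Ioc h_subst).symm

lemma integral_abs_rpow_mul_exp_neg_mul_abs_rpow (a : ℝ) {p : ℝ} (hp : 0 < p) (hz : 0 < z) :
    ∫ t in (-1 : ℝ)..1, |t| ^ a * Real.exp (-(z * |t| ^ p)) =
      2 / p * gammaMod ((a + 1) / p) z := by
  rw [intervalIntegral_comp_abs (fun t => t ^ a * Real.exp (-(z * t ^ p))) zero_le_one,
    integral_rpow_mul_exp_neg_mul_rpow_zero_one a hp hz]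
  ring

end IncompleteGamma

section Density

variable {σ μ : ℝ}

lemma gTilde_even (σ μ : ℝ) : (gTilde σ μ).Even := fun t => by
  simp only [gTilde, neg_sq]

lemma gTilde_eq_abs_rpow_mul_exp (hσ : 0 ≤ σ) (μ t : ℝ) :
    gTilde σ μ t = (2 * μ - 1) / gammaMod (1 / 2) (1 / (2 * σ ^ (4 * μ - 2))) *
      (|t| ^ (2 * μ - 2) *
        Real.exp (-(1 / (2 * σ ^ (4 * μ - 2)) * |t| ^ (4 * μ - 2)))) := by
  have h_sq_rpow {x : ℝ} (hx : 0 ≤ x) (r : ℝ) : (x ^ 2) ^ r = x ^ (2 * r) := by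
    rw [← Real.rpow_natCast_mul hx, Nat.cast_ofNat]
  rw [gTilde, ← sq_abs t, Real.div_rpow (sq_nonneg _) (sq_nonneg _), h_sq_rpow (abs_nonneg t),
    h_sq_rpow (abs_nonneg t), h_sq_rpow hσ, mul_assoc]
  ring_nf

lemma integral_abs_rpow_mul_gTilde (hσ : 0 < σ) (hμ : 1 / 2 < μ) (r : ℝ) :
    ∫ t in (-1 : ℝ)..1, |t| ^ r * gTilde σ μ t =
      gammaMod ((2 * μ - 1 + r) / (2 * (2 * μ - 1))) (1 / (2 * σ ^ (4 * μ - 2))) /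
        gammaMod (1 / 2) (1 / (2 * σ ^ (4 * μ - 2))) := by
  have hp : 0 < 2 * μ - 1 := by linarith
  have hz : 0 < 1 / (2 * σ ^ (4 * μ - 2)) := by positivity
  have h_exponent : 4 * μ - 2 = 2 * (2 * μ - 1) := by ring
  simp only [gTilde_eq_abs_rpow_mul_exp hσ.le]
  generalize 1 / (2 * σ ^ (4 * μ - 2)) = z at hz ⊢
  have h_integrand : ∀ᵐ t : ℝ, t ∈ Set.uIoc (-1) 1 →
      |t| ^ r * ((2 * μ - 1) / gammaMod (1 / 2) z *
          (|t| ^ (2 * μ - 2) * Real.exp (-(z * |t| ^ (4 * μ - 2))))) =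
        (2 * μ - 1) / gammaMod (1 / 2) z *
          (|t| ^ (2 * μ - 2 + r) * Real.exp (-(z * |t| ^ (2 * (2 * μ - 1))))) := by
    filter_upwards [Measure.ae_ne volume 0] with t ht _
    rw [Real.rpow_add (abs_pos.mpr ht), h_exponent]
    ring
  rw [intervalIntegral.integral_congr_ae h_integrand, intervalIntegral.integral_const_mul,
    integral_abs_rpow_mul_exp_neg_mul_abs_rpow _ (by positivity) hz,
    show 2 * μ - 2 + r + 1 = 2 * μ - 1 + r by ring]
  field_simp

lemma integral_gTilde (hσ : 0 < σ) (hμ : 1 / 2 < μ) : ∫ t in (-1 : ℝ)..1, gTilde σ μ t = 1 := by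
  have h_gamma : 0 < gammaMod (1 / 2) (1 / (2 * σ ^ (4 * μ - 2))) :=
    gammaMod_pos one_half_pos (by positivity)
  have h_order : (2 * μ - 1) / (2 * (2 * μ - 1)) = 1 / 2 := by
    rw [div_mul_cancel_right₀ (by linarith), one_div]
  have h_moment := integral_abs_rpow_mul_gTilde hσ hμ 0
  simpa only [Real.rpow_zero, one_mul, add_zero, h_order, div_self h_gamma.ne'] using h_moment

lemma integral_sq_mul_gTilde (hσ : 0 < σ) (hμ : 1 / 2 < μ) :
    ∫ t in (-1 : ℝ)..1, t ^ 2 * gTilde σ μ t =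
      gammaMod ((2 * μ + 1) / (2 * (2 * μ - 1))) (1 / (2 * σ ^ (4 * μ - 2))) /
        gammaMod (1 / 2) (1 / (2 * σ ^ (4 * μ - 2))) := by
  have h_moment := integral_abs_rpow_mul_gTilde hσ hμ 2
  rw [show 2 * μ - 1 + 2 = 2 * μ + 1 by ring] at h_moment
  simpa only [Real.rpow_two, sq_abs] using h_moment

lemma intervalIntegrable_gTilde (hσ : 0 < σ) (hμ : 1 / 2 < μ) :
    IntervalIntegrable (gTilde σ μ) volume (-1) 1 :=
  intervalIntegral.intervalIntegrable_of_integral_ne_zero <| by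
    rw [integral_gTilde hσ hμ]
    exact one_ne_zero

end Density

theorem qPoly_orthogonal_to_linear_general (σ μ : ℝ) (hσ : 0 < σ) (hμ : 1 / 2 < μ) (α β : ℝ) :
    ∫ t in (-1 : ℝ)..1, qPoly σ μ t * (α + β * t) * gTilde σ μ t = 0 := by
  refine integral_sq_sub_mul_affine_mul_eq_zero (intervalIntegrable_gTilde hσ hμ)
    (gTilde_even σ μ) ?_ α β
  rw [integral_sq_mul_gTilde hσ hμ, integral_gTilde hσ hμ, mul_one]

/-- `q_{σ,μ}` is orthogonal to all polynomials of degree at most one on `[-1,1]`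
with respect to the weight `g̃_{σ,μ}`. -/
theorem qPoly_orthogonal_to_linear (σ μ : ℝ) (hσ : 0 < σ) (hμ : 1 ≤ μ) :
    ∀ α β : ℝ,
      ∫ t in (-1:ℝ)..1, qPoly σ μ t * (α + β * t) * gTilde σ μ t = 0 :=
  qPoly_orthogonal_to_linear_general σ μ hσ (by linarith)
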